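/- Let f be a nonzero polynomial in ℂ[x,y] and let f̄ denote its coefficient-wise complex conjugate. Then the following are equivalent: (1) f has no real divisor, i.e., whenever f = r·g with r ∈ ℝ[x,y] and g ∈ ℂ[x,y], the polynomial r is a nonzero real constant; (2) f and f̄ are relatively prime in ℂ[x,y], i.e., every common divisor of f and f̄ in ℂ[x,y] is a unit (a nonzero constant). -/

import Mathlib

open MvPolynomial

/-!
If `f = r·g` with `r` real, then `r = r̄` divides both `f` and `f̄`, so coprimality of `f` and
`f̄` makes `r` a nonzero constant.

Conversely, let `d = gcd(f, f̄)`. Conjugation swaps `f` and `f̄`, so `d̄` is again a gcd and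
`d̄ = c·d` for a nonzero constant `c`. Hence `d` has a real associate (`exists_real_associated`):
`d + d̄ = (1 + c)·d` if `c ≠ -1`, and `i·d` otherwise. This associate is a real divisor of `f`,
so it is constant, and therefore `d` is a unit.
-/

/-- The conjugation-fixed polynomials are exactly those with real coefficients; this is the
nontrivial inclusion. -/
lemma exists_real_of_conj_eq {σ : Type*} (p : MvPolynomial σ ℂ)
    (hp : map (starRingEnd ℂ) p = p) :
    ∃ r : MvPolynomial σ ℝ, map (algebraMap ℝ ℂ) r = p := by
  refine Set.mem_range.1 (mem_range_map_iff_coeffs_subset.2 ?_)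
  intro z hz
  obtain ⟨m, -, rfl⟩ := mem_coeffs_iff.1 hz
  have h := congrArg (coeff m) hp
  rw [coeff_map] at h
  obtain ⟨x, hx⟩ := Complex.conj_eq_iff_real.1 h
  exact ⟨x, hx.symm⟩

lemma conj_conj {σ : Type*} (p : MvPolynomial σ ℂ) :
    map (starRingEnd ℂ) (map (starRingEnd ℂ) p) = p := by
  ext m
  simp [coeff_map]

lemma conj_real {σ : Type*} (r : MvPolynomial σ ℝ) :
    map (starRingEnd ℂ) (map (algebraMap ℝ ℂ) r) = map (algebraMap ℝ ℂ) r := by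
  ext m
  simp [coeff_map]

/-- A complex polynomial associated to its conjugate is, up to a constant, real. -/
lemma exists_real_associated {σ : Type*} (d : MvPolynomial σ ℂ)
    (hd : Associated d (map (starRingEnd ℂ) d)) :
    ∃ r : MvPolynomial σ ℝ, Associated d (map (algebraMap ℝ ℂ) r) := by
  obtain ⟨u, hu⟩ := hd
  obtain ⟨c, -, hc⟩ := isUnit_iff_eq_C_of_isReduced.1 u.isUnit
  rw [hc] at hu
  by_cases h : 1 + c = 0
  · obtain rfl : c = -1 := by linear_combination h
    obtain ⟨r, hr⟩ := exists_real_of_conj_eq (d * C Complex.I) (by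
      rw [map_mul, ← hu]
      simp)
    refine ⟨r, hr ▸ associated_mul_unit_right d _ ?_⟩
    exact (isUnit_iff_ne_zero.2 Complex.I_ne_zero).map C
  · obtain ⟨r, hr⟩ := exists_real_of_conj_eq (d + map (starRingEnd ℂ) d) (by
      rw [map_add, conj_conj, add_comm])
    refine ⟨r, ?_⟩
    have key : map (algebraMap ℝ ℂ) r = d * C (1 + c) := by
      rw [hr, ← hu, C_add, C_1]
      ring
    rw [key]
    exact associated_mul_unit_right d _ ((isUnit_iff_ne_zero.2 h).map C)

/-- A nonzero `f ∈ ℂ[x,y]` has no real divisor (every factorization `f = r·g` with `r`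
real forces `r` to be a nonzero real constant) if and only if `f` and its
coefficient-wise conjugate `f̄` are relatively prime in `ℂ[x,y]`. -/
theorem stmt_16 (f : MvPolynomial (Fin 2) ℂ) (hf : f ≠ 0) :
    (∀ (r : MvPolynomial (Fin 2) ℝ) (g : MvPolynomial (Fin 2) ℂ),
        f = MvPolynomial.map (algebraMap ℝ ℂ) r * g →
          ∃ c : ℝ, c ≠ 0 ∧ r = MvPolynomial.C c) ↔
    (∀ d : MvPolynomial (Fin 2) ℂ,
        d ∣ f → d ∣ MvPolynomial.map (starRingEnd ℂ) f → IsUnit d) := by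
  constructor
  · intro H e hef hef'
    let _ : GCDMonoid (MvPolynomial (Fin 2) ℂ) := UniqueFactorizationMonoid.toGCDMonoid _
    set d := gcd f (map (starRingEnd ℂ) f) with hd
    have hdf : d ∣ f := gcd_dvd_left _ _
    have hdf' : d ∣ map (starRingEnd ℂ) f := gcd_dvd_right _ _
    have h1 : map (starRingEnd ℂ) d ∣ d := by
      refine dvd_gcd ?_ (map_dvd _ hdf)
      simpa only [conj_conj] using map_dvd (map (starRingEnd ℂ)) hdf'
    have h2 : d ∣ map (starRingEnd ℂ) d := by
      simpa only [conj_conj] using map_dvd (map (starRingEnd ℂ)) h1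
    obtain ⟨r, hr⟩ := exists_real_associated d (associated_of_dvd_dvd h2 h1)
    obtain ⟨g, hg⟩ := hr.symm.dvd.trans hdf
    obtain ⟨c, hc, rfl⟩ := H r g hg
    have hu : IsUnit d :=
      hr.isUnit_iff.2 (((isUnit_iff_ne_zero.2 hc).map C).map (map (algebraMap ℝ ℂ)))
    exact isUnit_of_dvd_unit (dvd_gcd hef hef') hu
  · intro H r g hg
    have hu : IsUnit (map (algebraMap ℝ ℂ) r) := by
      refine H _ ⟨g, hg⟩ ⟨map (starRingEnd ℂ) g, ?_⟩
      rw [hg, map_mul, conj_real]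
    obtain ⟨z, hz, hrz⟩ := isUnit_iff_eq_C_of_isReduced.1 hu
    have hr : r = C (coeff 0 r) := by
      apply map_injective _ (algebraMap ℝ ℂ).injective
      have h0 := congrArg (coeff 0) hrz
      rw [coeff_map, coeff_zero_C] at h0
      rw [map_C, h0, hrz]
    refine ⟨coeff 0 r, fun h => hu.ne_zero ?_, hr⟩
    rw [hr, h, C_0, map_zero]
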